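/- For a commutative ring R, the following are equivalent: (1) every submodule of a w-FP-projective R-module is w-FP-projective; (2) every ideal of R is w-FP-projective; (3) every absolutely w-pure R-module has injective dimension at most 1; (4) R is an FP-hereditary DW-ring. -/

import Mathlib

open CategoryTheory

universe u

noncomputable section

variable (R : Type u) [CommRing R]

/-- The Ext group `Ext^n_R(M, N)` as an `R`-module (via `ModuleCat`). -/
def extMod (M N : Type u) [AddCommGroup M] [Module R M]
    [AddCommGroup N] [Module R N] (n : ℕ) : ModuleCat R :=
  ((Ext R (ModuleCat R) n).obj (Opposite.op (ModuleCat.of R M))).obj (ModuleCat.of R N)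

/-- `J` is a Glaz–Vasconcelos ideal: finitely generated and the natural map
`R → Hom_R(J, R)` is bijective. -/
def IsGVIdeal (J : Ideal R) : Prop :=
  J.FG ∧ Function.Bijective (fun r : R => (r • J.subtype : J →ₗ[R] R))

/-- A module is GV-torsion if every element is annihilated by some GV-ideal. -/
def IsGVTorsion (M : Type u) [AddCommGroup M] [Module R M] : Prop :=
  ∀ x : M, ∃ J : Ideal R, IsGVIdeal R J ∧ ∀ j ∈ J, j • x = 0

/-- An ideal `I` is a `w`-ideal if it is `w`-closed: whenever `J x ⊆ I` for some
GV-ideal `J`, one has `x ∈ I`. -/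
def IsWIdeal (I : Ideal R) : Prop :=
  ∀ (x : R) (J : Ideal R), IsGVIdeal R J → (∀ j ∈ J, j * x ∈ I) → x ∈ I

/-- `R` is a DW-ring if every maximal ideal is a `w`-ideal. -/
def IsDWRing : Prop :=
  ∀ m : Ideal R, m.IsMaximal → IsWIdeal R m

/-- `A` is absolutely `w`-pure if `Ext^1_R(N, A)` is GV-torsion for every
finitely presented module `N`. -/
def IsAbsolutelyWPure (A : Type u) [AddCommGroup A] [Module R A] : Prop :=
  ∀ (N : Type u) [AddCommGroup N] [Module R N], Module.FinitePresentation R N →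
    IsGVTorsion R (extMod R N A 1)

/-- `M` is `w`-FP-projective if `Ext^1_R(M, A) = 0` for every absolutely
`w`-pure module `A`. -/
def IsWFPProjective (M : Type u) [AddCommGroup M] [Module R M] : Prop :=
  ∀ (A : Type u) [AddCommGroup A] [Module R A], IsAbsolutelyWPure R A →
    Subsingleton (extMod R M A 1)

end
def IsAbsolutelyPure (R : Type u) [CommRing R]
    (A : Type u) [AddCommGroup A] [Module R A] : Prop :=
  ∀ (N : Type u) [AddCommGroup N] [Module R N], Module.FinitePresentation R N →
    Subsingleton (extMod R N A 1)

def IsFPProjective (R : Type u) [CommRing R]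
    (M : Type u) [AddCommGroup M] [Module R M] : Prop :=
  ∀ (A : Type u) [AddCommGroup A] [Module R A], IsAbsolutelyPure R A →
    Subsingleton (extMod R M A 1)

/-!
Baer's criterion, shifted by one degree, says that a module has injective dimension at most `1` as
soon as `Ext¹(I, A) = 0` for all ideals `I`; so conditions (1), (2) and (3) all express that every
absolutely `w`-pure module has injective dimension at most `1`. Over a DW-ring the only GV-ideal is
`R`, so absolutely `w`-pure modules are absolutely pure, which gives (4) ⇒ (2).

For (2) ⇒ (4) the point is that a `w`-FP-projective GV-ideal `J` equals `R`. Let `K` be the kernel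
of a surjection `q : Rⁿ → J`. Embed each `K / ⟨S⟩`, with `S ⊆ K` finite, in an injective module
`E S`. An element `k` dies in `E S` once `k ∈ S`, so `K` maps to the absolutely pure module of
eventually zero families in `∏ E S`. This map extends to `Rⁿ`, where it vanishes at a single `S` on
all generators, so `S` generates `K`. Now `K / JK` is killed by `J`, hence absolutely `w`-pure, and
`K → K / JK` extends to `Rⁿ`. Lifting the extension to `Rⁿ → K` gives an endomorphism of `K` that is
the identity modulo `JK`, and Cayley–Hamilton turns it into a factorization `r • id = q ∘ g` through
`g : J → Rⁿ` for some `r ≡ 1` modulo `J`. Since maps `J → R` are multiplications by elements of `R`,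
`g` is `x ↦ x • c` for some `c : Rⁿ`; then `r = q c`, which forces `r ∈ J` and thus `1 ∈ J`.
-/

section Ext

universe w

variable {C : Type*} [Category* C] [Abelian C]

section ProjectiveResolution

variable {X : C} (P : ProjectiveResolution X) (Y : C) (n : ℕ)

theorem subsingleton_derivedExt_succ_iff [EnoughProjectives C] (k : Type*) [Ring k]
    [Linear k C] :
    Subsingleton (((Ext k C (n + 1)).obj (.op X)).obj Y) ↔
      ∀ f : P.complex.X (n + 1) ⟶ Y, P.complex.d (n + 2) (n + 1) ≫ f = 0 →
        ∃ g : P.complex.X n ⟶ Y, P.complex.d (n + 1) n ≫ g = f := by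
  rw [← ModuleCat.isZero_iff_subsingleton, (P.isoExt (n + 1) Y).isZero_iff,
    ← HomologicalComplex.exactAt_iff_isZero_homology,
    HomologicalComplex.exactAt_iff' _ n (n + 1) (n + 2) (by simp) (by simp),
    ShortComplex.moduleCat_exact_iff]
  rfl

theorem subsingleton_ext_succ_iff [HasExt.{w} C] :
    Subsingleton (Abelian.Ext.{w} X Y (n + 1)) ↔
      ∀ f : P.complex.X (n + 1) ⟶ Y, P.complex.d (n + 2) (n + 1) ≫ f = 0 →
        ∃ g : P.complex.X n ⟶ Y, P.complex.d (n + 1) n ≫ g = f := by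
  simp only [subsingleton_iff_forall_eq (0 : Abelian.Ext X Y (n + 1))]
  constructor
  · intro h f hf
    exact (P.extMk_eq_zero_iff f (n + 2) rfl hf n rfl).1 (h _)
  · intro h x
    obtain ⟨f, hf, rfl⟩ := P.extMk_surjective x (n + 2) rfl
    exact (P.extMk_eq_zero_iff f (n + 2) rfl hf n rfl).2 (h f hf)

theorem subsingleton_derivedExt_succ_iff_subsingleton_ext [EnoughProjectives C]
    [HasExt.{w} C] (k : Type*) [Ring k] [Linear k C] (X Y : C) (n : ℕ) :
    Subsingleton (((Ext k C (n + 1)).obj (.op X)).obj Y) ↔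
      Subsingleton (Abelian.Ext.{w} X Y (n + 1)) := by
  let P := ProjectiveResolution.of X
  rw [subsingleton_derivedExt_succ_iff P, subsingleton_ext_succ_iff P]

end ProjectiveResolution

theorem subsingleton_ext_one_iff_of_projective [HasExt.{w} C] {S : ShortComplex C}
    (hS : S.ShortExact) [Projective S.X₂] (Y : C) :
    Subsingleton (Abelian.Ext.{w} S.X₃ Y 1) ↔
      ∀ g : S.X₁ ⟶ Y, ∃ g' : S.X₂ ⟶ Y, S.f ≫ g' = g := by
  constructor
  · intro h g
    obtain ⟨x, hx⟩ := Abelian.Ext.contravariant_sequence_exact₁ hS Y (.mk₀ g) rfl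
      (Subsingleton.elim _ _)
    obtain ⟨g', rfl⟩ := Abelian.Ext.mk₀_bijective _ _ |>.2 x
    exact ⟨g', Abelian.Ext.mk₀_bijective _ _ |>.1 (by simpa using hx)⟩
  · intro h
    refine subsingleton_of_forall_eq 0 fun x ↦ ?_
    obtain ⟨y, rfl⟩ := Abelian.Ext.contravariant_sequence_exact₃ hS Y x
      (Abelian.Ext.eq_zero_of_projective _) (add_zero 1)
    obtain ⟨g, rfl⟩ := Abelian.Ext.mk₀_bijective _ _ |>.2 y
    obtain ⟨g', rfl⟩ := h g
    rw [← Abelian.Ext.mk₀_comp_mk₀, hS.extClass_comp_assoc]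

theorem subsingleton_ext_of_mono [HasExt.{w} C] {N M : C} (f : N ⟶ M) [Mono f] (Y : C) (n : ℕ)
    [HasInjectiveDimensionLE Y n] [Subsingleton (Abelian.Ext.{w} M Y n)] :
    Subsingleton (Abelian.Ext.{w} N Y n) := by
  have hS : (ShortComplex.mk f _ (Limits.cokernel.condition f)).ShortExact :=
    { exact := ShortComplex.exact_cokernel f }
  refine subsingleton_of_forall_eq 0 fun x ↦ ?_
  have := HasInjectiveDimensionLT.subsingleton Y (n + 1) (n + 1) le_rfl (Limits.cokernel f)
  obtain ⟨y, rfl⟩ := Abelian.Ext.contravariant_sequence_exact₁ hS Y x (add_comm 1 n)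
    (Subsingleton.elim _ _)
  rw [Subsingleton.elim y 0, Abelian.Ext.comp_zero]

end Ext

section ModuleCat

variable {R : Type u} [Ring R]

theorem subsingleton_ext_one_iff_of_exact {K X M : Type u} [AddCommGroup K] [Module R K]
    [AddCommGroup X] [Module R X] [Module.Projective R X] [AddCommGroup M] [Module R M]
    {i : K →ₗ[R] X} {q : X →ₗ[R] M} (hi : Function.Injective i) (hiq : Function.Exact i q)
    (hq : Function.Surjective q) (A : Type u) [AddCommGroup A] [Module R A] :
    Subsingleton (Abelian.Ext (ModuleCat.of R M) (ModuleCat.of R A) 1) ↔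
      ∀ g : K →ₗ[R] A, ∃ g' : X →ₗ[R] A, g' ∘ₗ i = g := by
  let S := ModuleCat.shortComplexOfCompEqZero i q hiq.linearMap_comp_eq_zero
  have hS : S.ShortExact := ModuleCat.shortComplex_shortExact S hiq hi hq
  have : Projective S.X₂ := (IsProjective.iff_projective X).1 inferInstance
  refine (subsingleton_ext_one_iff_of_projective hS (ModuleCat.of R A)).trans
    ⟨fun h g ↦ ?_, fun h g ↦ ?_⟩
  · obtain ⟨g', hg'⟩ := h (ModuleCat.ofHom g)
    exact ⟨g'.hom, congrArg ModuleCat.Hom.hom hg'⟩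
  · obtain ⟨g', hg'⟩ := h g.hom
    exact ⟨ModuleCat.ofHom g', ModuleCat.hom_ext hg'⟩

theorem injective_of_subsingleton_ext_one (A : Type u) [AddCommGroup A] [Module R A]
    (h : ∀ I : Ideal R, Subsingleton (Abelian.Ext (ModuleCat.of R (R ⧸ I)) (ModuleCat.of R A) 1)) :
    Module.Injective R A := by
  apply Module.Baer.injective
  intro I g
  obtain ⟨g', hg'⟩ := (subsingleton_ext_one_iff_of_exact I.injective_subtype
    (LinearMap.exact_subtype_mkQ I) I.mkQ_surjective A).1 (h I) g
  exact ⟨g', fun x hx ↦ LinearMap.congr_fun hg' ⟨x, hx⟩⟩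

theorem hasInjectiveDimensionLE_of_subsingleton_ext (n : ℕ) (A : ModuleCat.{u} R)
    (h : ∀ I : Ideal R, Subsingleton (Abelian.Ext (ModuleCat.of R (R ⧸ I)) A (n + 1))) :
    HasInjectiveDimensionLE A n := by
  induction n generalizing A with
  | zero =>
    exact injective_iff_hasInjectiveDimensionLT_one.1
      ((Module.injective_iff_injective_object R A).1 (injective_of_subsingleton_ext_one A h))
  | succ n ih =>
    let i := Injective.ι A
    have hS : (ShortComplex.mk i _ (Limits.cokernel.condition i)).ShortExact :=
      { exact := ShortComplex.exact_cokernel i }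
    refine (hS.hasInjectiveDimensionLT_X₃_iff n inferInstance).1 <| ih _ fun I ↦
      subsingleton_of_forall_eq 0 fun x ↦ ?_
    have := h I
    obtain ⟨y, rfl⟩ := Abelian.Ext.covariant_sequence_exact₃ _ hS x rfl (Subsingleton.elim _ _)
    rw [Abelian.Ext.eq_zero_of_injective y, Abelian.Ext.zero_comp]

theorem exists_injective_linearMap (A : Type u) [AddCommGroup A] [Module R A] :
    ∃ (E : ModuleCat.{u} R) (i : A →ₗ[R] E), Function.Injective i ∧ Module.Injective R E := by
  obtain ⟨E, _, i, _⟩ := EnoughInjectives.presentation (ModuleCat.of R A)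
  exact ⟨E, i.hom, (ModuleCat.mono_iff_injective i).1 inferInstance,
    Module.injective_module_of_injective_object R E⟩

end ModuleCat

section ExtMod

variable {R : Type u} [CommRing R]

theorem subsingleton_extMod_succ_iff (M A : Type u) [AddCommGroup M] [Module R M]
    [AddCommGroup A] [Module R A] (n : ℕ) :
    Subsingleton (extMod R M A (n + 1)) ↔
      Subsingleton (Abelian.Ext (ModuleCat.of R M) (ModuleCat.of R A) (n + 1)) :=
  subsingleton_derivedExt_succ_iff_subsingleton_ext R _ _ n

theorem subsingleton_extMod_one_iff_of_surjective {X M : Type u} [AddCommGroup X] [Module R X]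
    [Module.Projective R X] [AddCommGroup M] [Module R M] {q : X →ₗ[R] M}
    (hq : Function.Surjective q) (A : Type u) [AddCommGroup A] [Module R A] :
    Subsingleton (extMod R M A 1) ↔
      ∀ g : LinearMap.ker q →ₗ[R] A, ∃ g' : X →ₗ[R] A, g' ∘ₗ (LinearMap.ker q).subtype = g :=
  (subsingleton_extMod_succ_iff M A 0).trans <| subsingleton_ext_one_iff_of_exact
    (LinearMap.ker q).injective_subtype (LinearMap.exact_subtype_ker_map q) hq A

theorem subsingleton_extMod_succ_of_projective (M A : Type u) [AddCommGroup M] [Module R M]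
    [Module.Projective R M] [AddCommGroup A] [Module R A] (n : ℕ) :
    Subsingleton (extMod R M A (n + 1)) := by
  have : Projective (ModuleCat.of R M) := (IsProjective.iff_projective M).1 inferInstance
  exact (subsingleton_extMod_succ_iff M A n).2
    (subsingleton_of_forall_eq 0 Abelian.Ext.eq_zero_of_projective)

theorem hasInjectiveDimensionLE_iff_forall_extMod (A : Type u) [AddCommGroup A] [Module R A]
    (n : ℕ) :
    HasInjectiveDimensionLE (ModuleCat.of R A) n ↔
      ∀ (N : Type u) [AddCommGroup N] [Module R N], Subsingleton (extMod R N A (n + 1)) := by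
  constructor
  · intro h N _ _
    exact (subsingleton_extMod_succ_iff N A n).2
      (HasInjectiveDimensionLT.subsingleton _ (n + 1) _ le_rfl _)
  · intro h
    exact hasInjectiveDimensionLT_of_enoughProjectives _ _ fun N ↦
      (subsingleton_extMod_succ_iff N A n).1 (h N)

theorem subsingleton_extMod_of_injective {N M A : Type u} [AddCommGroup N] [Module R N]
    [AddCommGroup M] [Module R M] [AddCommGroup A] [Module R A] {f : N →ₗ[R] M}
    (hf : Function.Injective f) (n : ℕ) (hA : HasInjectiveDimensionLE (ModuleCat.of R A) (n + 1))
    (hM : Subsingleton (extMod R M A (n + 1))) : Subsingleton (extMod R N A (n + 1)) := by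
  have : Mono (ModuleCat.ofHom f) := (ModuleCat.mono_iff_injective _).2 hf
  rw [subsingleton_extMod_succ_iff] at hM ⊢
  exact subsingleton_ext_of_mono (ModuleCat.ofHom f) _ _

theorem hasInjectiveDimensionLE_succ_iff_forall_ideal (A : Type u) [AddCommGroup A] [Module R A]
    (n : ℕ) :
    HasInjectiveDimensionLE (ModuleCat.of R A) (n + 1) ↔
      ∀ I : Ideal R, Subsingleton (extMod R I A (n + 1)) := by
  constructor
  · intro h I
    exact subsingleton_extMod_of_injective I.injective_subtype n h
      (subsingleton_extMod_succ_of_projective R A n)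
  · intro h
    refine hasInjectiveDimensionLE_of_subsingleton_ext _ _ fun I ↦
      subsingleton_of_forall_eq 0 fun x ↦ ?_
    let S := ModuleCat.shortComplexOfCompEqZero I.subtype I.mkQ
      (LinearMap.exact_subtype_mkQ I).linearMap_comp_eq_zero
    have hS : S.ShortExact := ModuleCat.shortComplex_shortExact S
      (LinearMap.exact_subtype_mkQ I) I.injective_subtype I.mkQ_surjective
    have : Projective S.X₂ := (IsProjective.iff_projective R).1 inferInstance
    have : Subsingleton (Abelian.Ext S.X₁ (ModuleCat.of R A) (n + 1)) :=
      (subsingleton_extMod_succ_iff I A n).1 (h I)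
    obtain ⟨y, rfl⟩ := precomp_extClass_surjective_of_projective_X₂ _ hS (n + 1) x
    rw [Subsingleton.elim y 0, map_zero]

theorem homology_smul_eq_zero {ι : Type*} {c : ComplexShape ι}
    (K : HomologicalComplex (ModuleCat R) c) (i : ι) {r : R} (hr : ∀ x : K.X i, r • x = 0)
    (x : K.homology i) : r • x = 0 := by
  obtain ⟨z, rfl⟩ := (ModuleCat.epi_iff_surjective (K.homologyπ i)).1 inferInstance x
  have hz : r • z = 0 := (ModuleCat.mono_iff_injective (K.iCycles i)).1 inferInstance (by
    rw [map_zero, map_smul, hr])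
  rw [← map_smul, hz, map_zero]

theorem extMod_smul_eq_zero (M : Type u) {A : Type u} [AddCommGroup M] [Module R M]
    [AddCommGroup A] [Module R A] (n : ℕ) {r : R} (hr : ∀ a : A, r • a = 0)
    (x : extMod R M A n) : r • x = 0 := by
  let P := ProjectiveResolution.of (ModuleCat.of R M)
  let e : extMod R M A n ≃ₗ[R] _ := (P.isoExt n (ModuleCat.of R A)).toLinearEquiv
  apply e.injective
  rw [map_zero, map_smul]
  exact homology_smul_eq_zero _ n (fun f ↦ ModuleCat.hom_ext (LinearMap.ext fun t ↦ hr _)) _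

end ExtMod

section EventuallyZero

/-- The families `x` in the product of the `E i` that vanish eventually along the filter `l`; for
the cofinite filter this is the direct sum. -/
def eventuallyZero (R : Type*) [Semiring R] {ι : Type*} (l : Filter ι) (E : ι → Type*)
    [∀ i, AddCommMonoid (E i)] [∀ i, Module R (E i)] : Submodule R (∀ i, E i) where
  carrier := {x | ∀ᶠ i in l, x i = 0}
  zero_mem' := .of_forall fun _ ↦ rfl
  add_mem' hx hy := by
    filter_upwards [hx, hy] with i hxi hyi
    rw [Pi.add_apply, hxi, hyi, add_zero]
  smul_mem' r x hx := by
    filter_upwards [hx] with i hxi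
    rw [Pi.smul_apply, hxi, smul_zero]

variable {ι : Type*} {l : Filter ι}

theorem eventually_eq_zero_of_finite {R : Type*} [Semiring R] {E : ι → Type*}
    [∀ i, AddCommMonoid (E i)] [∀ i, Module R (E i)] {Y : Type*} [AddCommMonoid Y] [Module R Y]
    [Module.Finite R Y] (φ : Y →ₗ[R] eventuallyZero R l E) :
    ∀ᶠ i in l, LinearMap.proj i ∘ₗ (eventuallyZero R l E).subtype ∘ₗ φ = 0 := by
  obtain ⟨s, hs⟩ := Module.Finite.fg_top (R := R) (M := Y)
  filter_upwards [(Filter.eventually_all_finset s).2 fun y _ ↦ (φ y).2] with i hi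
  exact LinearMap.ext_on hs hi

theorem exists_comp_subtype_eq_eventuallyZero {R : Type*} [Semiring R] {E : ι → Type*}
    [∀ i, AddCommMonoid (E i)] [∀ i, Module R (E i)] {X : Type*} [AddCommMonoid X] [Module R X]
    {K : Submodule R X} [Module.Finite R K]
    (hE : ∀ i, ∀ g : K →ₗ[R] E i, ∃ g' : X →ₗ[R] E i, g' ∘ₗ K.subtype = g)
    (g : K →ₗ[R] eventuallyZero R l E) :
    ∃ g' : X →ₗ[R] eventuallyZero R l E, g' ∘ₗ K.subtype = g := by
  classical
  have hg := eventually_eq_zero_of_finite g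
  choose a ha using fun i ↦ hE i (LinearMap.proj i ∘ₗ (eventuallyZero R l E).subtype ∘ₗ g)
  -- Extending zero components by zero keeps the extended family eventually zero.
  let a' : ∀ i, X →ₗ[R] E i := fun i ↦
    if LinearMap.proj i ∘ₗ (eventuallyZero R l E).subtype ∘ₗ g = 0 then 0 else a i
  have ha' : ∀ i, a' i ∘ₗ K.subtype = LinearMap.proj i ∘ₗ (eventuallyZero R l E).subtype ∘ₗ g := by
    intro i
    by_cases hi : LinearMap.proj i ∘ₗ (eventuallyZero R l E).subtype ∘ₗ g = 0
    · simp only [a', if_pos hi, LinearMap.zero_comp, hi]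
    · simp only [a', if_neg hi, ha]
  refine ⟨(LinearMap.pi a').codRestrict _ fun x ↦ ?_, ?_⟩
  · filter_upwards [hg] with i hi
    simp [a', hi]
  · ext k i
    exact LinearMap.congr_fun (ha' i) k

end EventuallyZero

section FPProjective

variable {R : Type u} [CommRing R]

theorem isAbsolutelyPure_of_injective (A : Type u) [AddCommGroup A] [Module R A]
    [Module.Injective R A] : IsAbsolutelyPure R A := by
  have : Injective (ModuleCat.of R A) := (Module.injective_iff_injective_object R A).1 inferInstance
  exact fun N _ _ _ ↦ (subsingleton_extMod_succ_iff N A 0).2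
    (subsingleton_of_forall_eq 0 Abelian.Ext.eq_zero_of_injective)

theorem isAbsolutelyPure_eventuallyZero {ι : Type u} {l : Filter ι} {E : ι → Type u}
    [∀ i, AddCommGroup (E i)] [∀ i, Module R (E i)] (hE : ∀ i, IsAbsolutelyPure R (E i)) :
    IsAbsolutelyPure R (eventuallyZero R l E) := by
  intro N _ _ hN
  obtain ⟨n, q, hq⟩ := Module.Finite.exists_fin' R N
  have : Module.Finite R (LinearMap.ker q) :=
    Module.Finite.iff_fg.2 (Module.FinitePresentation.fg_ker q hq)
  exact (subsingleton_extMod_one_iff_of_surjective hq _).2 <|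
    exists_comp_subtype_eq_eventuallyZero fun i ↦
      (subsingleton_extMod_one_iff_of_surjective hq (E i)).1 (hE i N hN)

theorem finite_ker_of_isFPProjective {X M : Type u} [AddCommGroup X] [Module R X]
    [Module.Projective R X] [Module.Finite R X] [AddCommGroup M] [Module R M]
    {q : X →ₗ[R] M} (hq : Function.Surjective q) (hM : IsFPProjective R M) :
    Module.Finite R (LinearMap.ker q) := by
  set K := LinearMap.ker q
  choose E i hi hE using fun S : Finset K ↦
    exists_injective_linearMap (R := R) (K ⧸ Submodule.span R (S : Set K))
  let φ : K →ₗ[R] eventuallyZero R .atTop fun S ↦ E S :=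
    (LinearMap.pi fun S ↦ i S ∘ₗ (Submodule.span R (S : Set K)).mkQ).codRestrict _ fun k ↦ by
      filter_upwards [Filter.eventually_ge_atTop {k}] with S hS
      have hk : k ∈ Submodule.span R (S : Set K) := Submodule.subset_span (by simpa using hS)
      simpa using congrArg (i S) ((Submodule.Quotient.mk_eq_zero _).2 hk)
  obtain ⟨g, hg⟩ := (subsingleton_extMod_one_iff_of_surjective hq _).1
    (hM _ (isAbsolutelyPure_eventuallyZero fun S ↦ isAbsolutelyPure_of_injective (E S))) φ
  obtain ⟨S, hS⟩ := (eventually_eq_zero_of_finite g).exists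
  refine ⟨⟨S, eq_top_iff.2 fun k _ ↦ (Submodule.Quotient.mk_eq_zero _).1 (hi S ?_)⟩⟩
  have hgk : g k = φ k := LinearMap.congr_fun hg k
  calc i S (Submodule.Quotient.mk k) = (g k : ∀ S, E S) S := by rw [hgk]; rfl
    _ = 0 := LinearMap.congr_fun hS k
    _ = i S 0 := (map_zero _).symm

end FPProjective

section LinearAlgebra

theorem exists_comp_eq_of_ker_le_ker {R X M N : Type*} [Ring R] [AddCommGroup X] [Module R X]
    [AddCommGroup M] [Module R M] [AddCommGroup N] [Module R N] {q : X →ₗ[R] M}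
    (hq : Function.Surjective q)
    (b : X →ₗ[R] N) (hb : LinearMap.ker q ≤ LinearMap.ker b) : ∃ g : M →ₗ[R] N, g ∘ₗ q = b := by
  refine ⟨(LinearMap.ker q).liftQ b hb ∘ₗ (q.quotKerEquivOfSurjective hq).symm.toLinearMap, ?_⟩
  ext x
  simp

variable {R : Type*} [CommRing R]

theorem eval_one_sub_one_mem {J : Ideal R} {p : Polynomial R} (hp : p.Monic)
    (hJ : ∀ k < p.natDegree, p.coeff k ∈ J) : p.eval 1 - 1 ∈ J := by
  simp only [Polynomial.eval_eq_sum_range, Finset.sum_range_succ, one_pow, mul_one,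
    hp.coeff_natDegree, add_sub_cancel_right]
  exact J.sum_mem fun k hk ↦ hJ k (Finset.mem_range.1 hk)

theorem exists_mul_eq_algebraMap_of_range_one_sub_le {K : Type*} [AddCommGroup K] [Module R K]
    [Module.Finite R K] {J : Ideal R} {v : Module.End R K}
    (hv : LinearMap.range (1 - v) ≤ J • ⊤) :
    ∃ r : R, r - 1 ∈ J ∧ ∃ z : Module.End R K, z * v = algebraMap R (Module.End R K) r := by
  obtain ⟨p, hp, -, hpJ, hpv⟩ :=
    LinearMap.exists_monic_and_natDegree_eq_and_coeff_mem_pow_and_aeval_eq_zero R (1 - v) J hv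
  obtain ⟨s, hs⟩ := Polynomial.X_sub_C_dvd_sub_C_eval (a := (1 : R)) (p := p)
  refine ⟨p.eval 1, eval_one_sub_one_mem hp fun k hk ↦
    Ideal.pow_le_self (Nat.sub_ne_zero_of_lt hk) (hpJ k), Polynomial.aeval (1 - v) s, ?_⟩
  have h := congrArg (Polynomial.aeval (1 - v)) (hs.trans (mul_comm _ s))
  simpa [hpv] using h.symm

end LinearAlgebra

section WFPProjective

variable {R : Type u} [CommRing R]

theorem exists_comp_eq_smul_id_of_subsingleton_extMod {X M : Type u} [AddCommGroup X] [Module R X]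
    [Module.Projective R X] [AddCommGroup M] [Module R M] {q : X →ₗ[R] M}
    (hq : Function.Surjective q) [Module.Finite R (LinearMap.ker q)] {J : Ideal R}
    (hJ : Subsingleton (extMod R M
      (LinearMap.ker q ⧸ (J • ⊤ : Submodule R (LinearMap.ker q))) 1)) :
    ∃ r : R, r - 1 ∈ J ∧ ∃ g : M →ₗ[R] X, q ∘ₗ g = r • LinearMap.id := by
  set K := LinearMap.ker q
  obtain ⟨θ', hθ'⟩ := (subsingleton_extMod_one_iff_of_surjective hq _).1 hJ
    (J • ⊤ : Submodule R K).mkQ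
  obtain ⟨θ, rfl⟩ := Module.projective_lifting_property _ θ' (Submodule.mkQ_surjective _)
  have hθ : LinearMap.range (1 - θ ∘ₗ K.subtype) ≤ J • ⊤ := by
    rw [← Submodule.ker_mkQ (J • ⊤ : Submodule R K), LinearMap.range_le_ker_iff,
      LinearMap.comp_sub, ← LinearMap.comp_assoc, hθ']
    exact sub_self _
  obtain ⟨r, hr, z, hz⟩ := exists_mul_eq_algebraMap_of_range_one_sub_le hθ
  let b : X →ₗ[R] X := r • LinearMap.id - K.subtype ∘ₗ z ∘ₗ θ
  have hb : K ≤ LinearMap.ker b := fun k hk ↦ by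
    have : z (θ k) = r • ⟨k, hk⟩ := LinearMap.congr_fun hz ⟨k, hk⟩
    simp [b, this]
  obtain ⟨g, hg⟩ := exists_comp_eq_of_ker_le_ker hq b hb
  refine ⟨r, hr, g, LinearMap.cancel_right hq |>.1 ?_⟩
  ext x
  have : q (z (θ x)) = 0 := (z (θ x)).2
  simp [LinearMap.comp_assoc, hg, b, this]

theorem isGVIdeal_top : IsGVIdeal R (⊤ : Ideal R) := by
  refine ⟨Module.Finite.fg_top, fun r s h ↦ ?_, fun f ↦ ⟨f ⟨1, trivial⟩, ?_⟩⟩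
  · simpa using LinearMap.congr_fun h ⟨1, trivial⟩
  · ext x
    have hx : x = (x : R) • (⟨1, trivial⟩ : (⊤ : Ideal R)) := Subtype.ext (by simp)
    conv_rhs => rw [hx, map_smul]
    simp [mul_comm]

theorem IsGVIdeal.mem_of_comp_eq_smul_id {J : Ideal R} (hJ : IsGVIdeal R J) {ι : Type*}
    {q : (ι → R) →ₗ[R] J} {g : J →ₗ[R] ι → R} {r : R} (h : q ∘ₗ g = r • LinearMap.id) :
    r ∈ J := by
  choose c hc using fun i ↦ hJ.2.2 (LinearMap.proj i ∘ₗ g)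
  have hg (x : J) : g x = (x : R) • c := by
    ext i
    simpa [mul_comm] using (LinearMap.congr_fun (hc i) x).symm
  have hqc : (q c : R) = r := hJ.2.1 <| by
    ext x
    have hx := congrArg Subtype.val (LinearMap.congr_fun h x)
    simpa [hg, mul_comm] using hx
  exact hqc ▸ (q c).2

theorem IsGVIdeal.isAbsolutelyWPure_of_isTorsionBySet {J : Ideal R} (hJ : IsGVIdeal R J)
    {A : Type u} [AddCommGroup A] [Module R A] (hA : Module.IsTorsionBySet R A J) :
    IsAbsolutelyWPure R A :=
  fun N _ _ _ _ ↦ ⟨J, hJ, fun j hj ↦ extMod_smul_eq_zero N 1 (fun a ↦ @hA a ⟨j, hj⟩) _⟩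

theorem IsAbsolutelyPure.isAbsolutelyWPure {A : Type u} [AddCommGroup A] [Module R A]
    (hA : IsAbsolutelyPure R A) : IsAbsolutelyWPure R A := fun N _ _ hN _ ↦
  have := hA N hN
  ⟨⊤, isGVIdeal_top, fun _ _ ↦ Subsingleton.elim _ _⟩

theorem IsWFPProjective.isFPProjective {M : Type u} [AddCommGroup M] [Module R M]
    (hM : IsWFPProjective R M) : IsFPProjective R M :=
  fun A _ _ hA ↦ hM A hA.isAbsolutelyWPure

theorem IsGVIdeal.eq_top_of_isWFPProjective {J : Ideal R} (hJ : IsGVIdeal R J)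
    (hP : IsWFPProjective R J) : J = ⊤ := by
  have : Module.Finite R J := Module.Finite.iff_fg.2 hJ.1
  obtain ⟨n, q, hq⟩ := Module.Finite.exists_fin' R J
  have := finite_ker_of_isFPProjective hq hP.isFPProjective
  obtain ⟨r, hr, g, hg⟩ := exists_comp_eq_smul_id_of_subsingleton_extMod (J := J) hq <|
    hP _ <| hJ.isAbsolutelyWPure_of_isTorsionBySet <|
      Module.isTorsionBySet_quotient_ideal_smul (LinearMap.ker q) J
  have hrJ : r ∈ J := hJ.mem_of_comp_eq_smul_id hg
  exact (Ideal.eq_top_iff_one J).2 ((sub_sub_cancel r 1) ▸ J.sub_mem hrJ hr)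

theorem isDWRing_iff : IsDWRing R ↔ ∀ J : Ideal R, IsGVIdeal R J → J = ⊤ := by
  constructor
  · intro h J hJ
    by_contra hne
    obtain ⟨m, hm, hJm⟩ := J.exists_le_maximal hne
    exact hm.ne_top ((Ideal.eq_top_iff_one m).2 (h m hm 1 J hJ fun j hj ↦ by simpa using hJm hj))
  · intro h m _ x J hJ hx
    simpa using hx 1 (h J hJ ▸ Submodule.mem_top)

theorem IsAbsolutelyWPure.isAbsolutelyPure (hR : IsDWRing R) {A : Type u} [AddCommGroup A]
    [Module R A] (hA : IsAbsolutelyWPure R A) : IsAbsolutelyPure R A := fun N _ _ hN ↦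
  subsingleton_of_forall_eq 0 fun x ↦ by
    obtain ⟨J, hJ, hx⟩ := hA N hN x
    simpa using hx 1 (isDWRing_iff.1 hR J hJ ▸ Submodule.mem_top)

theorem forall_ideal_isWFPProjective_iff :
    (∀ I : Ideal R, IsWFPProjective R I) ↔ (∀ I : Ideal R, IsFPProjective R I) ∧ IsDWRing R :=
  ⟨fun h ↦ ⟨fun I ↦ (h I).isFPProjective,
      isDWRing_iff.2 fun J hJ ↦ hJ.eq_top_of_isWFPProjective (h J)⟩,
    fun ⟨h, hR⟩ I A _ _ hA ↦ h I A (hA.isAbsolutelyPure hR)⟩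

theorem forall_ideal_isWFPProjective_iff_hasInjectiveDimensionLE :
    (∀ I : Ideal R, IsWFPProjective R I) ↔
      ∀ (A : Type u) [AddCommGroup A] [Module R A], IsAbsolutelyWPure R A →
        HasInjectiveDimensionLE (ModuleCat.of R A) 1 := by
  simp only [hasInjectiveDimensionLE_succ_iff_forall_ideal]
  exact ⟨fun h A _ _ hA I ↦ h I A hA, fun h I A _ _ hA ↦ h A hA I⟩

theorem isWFPProjective_of_projective (M : Type u) [AddCommGroup M] [Module R M]
    [Module.Projective R M] : IsWFPProjective R M :=
  fun A _ _ _ ↦ subsingleton_extMod_succ_of_projective M A 0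

theorem forall_isWFPProjective_of_injective_iff :
    (∀ (N M : Type u) [AddCommGroup N] [Module R N] [AddCommGroup M] [Module R M],
        IsWFPProjective R M → ∀ f : N →ₗ[R] M, Function.Injective f → IsWFPProjective R N) ↔
      ∀ I : Ideal R, IsWFPProjective R I := by
  constructor
  · intro h I
    exact h I R (isWFPProjective_of_projective R) I.subtype I.injective_subtype
  · intro h N M _ _ _ _ hM f hf A _ _ hA
    exact subsingleton_extMod_of_injective hf 0
      (forall_ideal_isWFPProjective_iff_hasInjectiveDimensionLE.1 h A hA) (hM A hA)

end WFPProjective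

/-- The following are equivalent: (1) every submodule of a `w`-FP-projective module is
`w`-FP-projective; (2) every ideal of `R` is `w`-FP-projective; (3) every absolutely
`w`-pure module has injective dimension at most `1`; (4) `R` is an FP-hereditary
DW-ring. -/
theorem fpHereditaryDW_characterization (R : Type u) [CommRing R] :
    ((∀ (N M : Type u) [AddCommGroup N] [Module R N] [AddCommGroup M] [Module R M],
        IsWFPProjective R M → ∀ f : N →ₗ[R] M, Function.Injective f →
          IsWFPProjective R N) ↔
      ((∀ I : Ideal R, IsFPProjective R I) ∧ IsDWRing R)) ∧
    ((∀ I : Ideal R, IsWFPProjective R I) ↔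
      ((∀ I : Ideal R, IsFPProjective R I) ∧ IsDWRing R)) ∧
    ((∀ (A : Type u) [AddCommGroup A] [Module R A], IsAbsolutelyWPure R A →
        ∀ (N : Type u) [AddCommGroup N] [Module R N], Subsingleton (extMod R N A 2)) ↔
      ((∀ I : Ideal R, IsFPProjective R I) ∧ IsDWRing R)) := by
  refine ⟨forall_isWFPProjective_of_injective_iff.trans forall_ideal_isWFPProjective_iff,
    forall_ideal_isWFPProjective_iff, ?_⟩
  rw [← forall_ideal_isWFPProjective_iff,
    forall_ideal_isWFPProjective_iff_hasInjectiveDimensionLE]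
  simp only [hasInjectiveDimensionLE_iff_forall_extMod]
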